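/- arXiv:2211.07736 — 5 statements merged into one kernel-verified Lean document; each statement's English description precedes it below -/
import Mathlib

section
/- Let X be a complex Banach space, T a bounded linear operator on X, and β an ordinal. Suppose that T is g_σ^{β+1}-invertible and that 0 ∈ acc σ(T). Then there exists a sequence (M_m, N_m)_{m∈ℕ} of pairs in Red(T) such that for every m: T_{M_m} is an invertible operator on M_m, acc^β σ(T_{N_m}) ⊆ {0}, σ(T_{M_m}) ⊊ σ(T_{M_{m+1}}), σ(T_{N_{m+1}}) ⊊ σ(T_{N_m}), and σ(T_{M_m}) ∩ σ(T_{N_m}) = ∅. -/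
open Ordinal Set

/-- The `α`-th Cantor–Bendixson derivative of a set `A ⊆ ℂ`, defined by transfinite
recursion: `cbd A 0 = A`, `cbd A (β+1) = derivedSet (cbd A β)` (the set of accumulation
points of `cbd A β`), and `cbd A α = ⋂_{β < α} cbd A β` for limit ordinals `α`. -/
noncomputable def cbd (A : Set ℂ) (α : Ordinal) : Set ℂ :=
  Ordinal.limitRecOn α A (fun _ ih => derivedSet ih)
    (fun α _ ih => ⋂ (β : Set.Iio α), ih β.1 β.2)

variable {X : Type*} [NormedAddCommGroup X] [NormedSpace ℂ X] [CompleteSpace X]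

/-- The restriction `T_M` of a bounded operator `T` to a `T`-invariant subspace `M`. -/
noncomputable def restr (T : X →L[ℂ] X) (M : Submodule ℂ X)
    (hM : ∀ x ∈ M, T x ∈ M) : M →L[ℂ] M :=
  { toLinearMap := T.toLinearMap.restrict hM
    cont := (T.continuous.comp continuous_subtype_val).subtype_mk _ }


/-- `T` is `g_σ^{β+1}`-invertible: there is `(M, N) ∈ Red T` (a pair of closed
`T`-invariant subspaces with `X = M ⊕ N`) such that `T_M` is invertible and
`acc^β σ(T_N) ⊆ {0}`. -/
def GInv (β : Ordinal) (T : X →L[ℂ] X) : Prop :=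
  ∃ (M N : Submodule ℂ X) (hM : ∀ x ∈ M, T x ∈ M) (hN : ∀ x ∈ N, T x ∈ N),
    IsClosed (M : Set X) ∧ IsClosed (N : Set X) ∧ IsCompl M N ∧
    IsUnit (restr T M hM) ∧ cbd (spectrum ℂ (restr T N hN)) β ⊆ {0}

theorem cbd_zero' (A : Set ℂ) : cbd A 0 = A := by
  unfold cbd; exact Ordinal.limitRecOn_zero _ _ _

theorem cbd_add_one' (A : Set ℂ) (o : Ordinal) : cbd A (o + 1) = derivedSet (cbd A o) := by
  unfold cbd; exact Ordinal.limitRecOn_add_one _ _ _ _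

theorem cbd_limit' (A : Set ℂ) (o : Ordinal) (h : Order.IsSuccLimit o) :
    cbd A o = ⋂ (β : Set.Iio o), cbd A β.1 := by
  unfold cbd; exact Ordinal.limitRecOn_limit _ _ _ _ h

theorem cbd_mono' {A B : Set ℂ} (h : A ⊆ B) (o : Ordinal) : cbd A o ⊆ cbd B o := by
  induction o using Ordinal.limitRecOn with
  | zero => simpa only [cbd_zero'] using h
  | add_one o ih => simpa only [cbd_add_one'] using derivedSet_mono _ _ ih
  | limit o ho ih =>
    rw [cbd_limit' _ _ ho, cbd_limit' _ _ ho]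
    exact Set.iInter_mono fun b => ih b.1 b.2

theorem subset_cbd_of_preperfect {A D : Set ℂ} (hD : Preperfect D) (h : D ⊆ A) (o : Ordinal) :
    D ⊆ cbd A o := by
  induction o using Ordinal.limitRecOn with
  | zero => simpa only [cbd_zero'] using h
  | add_one o ih =>
    rw [cbd_add_one']
    exact fun x hx => derivedSet_mono _ _ ih (hD x hx)
  | limit o ho ih =>
    rw [cbd_limit' _ _ ho]
    exact Set.subset_iInter fun b => ih b.1 b.2

theorem countable_of_cbd {A : Set ℂ} (hA : IsClosed A) (o : Ordinal) (h : cbd A o ⊆ {0}) :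
    A.Countable := by
  by_contra hc
  obtain ⟨D, hD, ⟨x, hx⟩, hDA⟩ := exists_perfect_nonempty_of_isClosed_of_not_countable hA hc
  have h1 : D ⊆ {0} := (subset_cbd_of_preperfect hD.acc hDA o).trans h
  obtain ⟨y, ⟨_, hy⟩, hne⟩ := preperfect_iff_nhds.1 hD.acc x hx Set.univ Filter.univ_mem
  exact hne ((h1 hy).trans (h1 hx).symm)

section Riesz

variable {A : Type*} [NormedRing A] [NormedAlgebra ℂ A] [CompleteSpace A]

theorem circleIntegral_clm {B : Type*} [NormedAddCommGroup B] [NormedSpace ℂ B] [CompleteSpace B]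
    (L : A →L[ℂ] B) {f : ℂ → A} {c : ℂ} {r : ℝ}
    (hf : CircleIntegrable f c r) : L (circleIntegral f c r) = circleIntegral (fun z => L (f z)) c r := by
  unfold circleIntegral
  rw [← L.intervalIntegral_comp_comm hf.out]
  simp

theorem circleIntegral_mul_left' (b : A) {f : ℂ → A} {c : ℂ} {r : ℝ}
    (hf : CircleIntegrable f c r) : b * circleIntegral f c r = circleIntegral (fun z => b * f z) c r :=
  circleIntegral_clm (ContinuousLinearMap.mul ℂ A b) hf

theorem circleIntegral_mul_right' (b : A) {f : ℂ → A} {c : ℂ} {r : ℝ}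
    (hf : CircleIntegrable f c r) : circleIntegral f c r * b = circleIntegral (fun z => f z * b) c r :=
  circleIntegral_clm ((ContinuousLinearMap.mul ℂ A).flip b) hf

theorem commute_resolvent' {a b : A} (h : Commute b a) (z : ℂ) : Commute b (resolvent a z) := by
  unfold resolvent
  have hc : Commute b (algebraMap ℂ A z - a) := (Algebra.commute_algebraMap_right z b).sub_right h
  by_cases hu : IsUnit (algebraMap ℂ A z - a)
  · obtain ⟨u, hu⟩ := hu
    rw [← hu] at hc ⊢
    rw [Ring.inverse_unit]
    exact hc.units_inv_right
  · rw [Ring.inverse_non_unit _ hu]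
    exact Commute.zero_right b

theorem commute_circleIntegral {a b : A} (h : Commute b a) {g : ℂ → ℂ} {r : ℝ}
    (hf : CircleIntegrable (fun z => g z • resolvent a z) 0 r) :
    Commute b (circleIntegral (fun z => g z • resolvent a z) 0 r) := by
  unfold Commute SemiconjBy
  rw [circleIntegral_mul_left' _ hf, circleIntegral_mul_right' _ hf]
  congr 1; ext z
  exact ((commute_resolvent' h z).smul_right (g z))

theorem continuousOn_resolvent' {a : A} {s : Set ℂ} (h : ∀ z ∈ s, z ∉ spectrum ℂ a) :
    ContinuousOn (resolvent a) s := fun z hz =>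
  (spectrum.hasDerivAt_resolvent_const_left (𝕜 := ℂ) (a := a)
    (spectrum.notMem_iff.1 (h z hz))).continuousAt.continuousWithinAt

theorem sub_mul_resolvent' {a : A} {z : ℂ} (w : ℂ) (h : z ∉ spectrum ℂ a) :
    (algebraMap ℂ A w - a) * resolvent a z = 1 - (z - w) • resolvent a z := by
  have h1 : (algebraMap ℂ A z - a) * resolvent a z = 1 :=
    Ring.mul_inverse_cancel _ (spectrum.notMem_iff.1 h)
  have h2 : algebraMap ℂ A w - a = (algebraMap ℂ A z - a) - (z - w) • (1 : A) := by
    rw [Algebra.algebraMap_eq_smul_one, Algebra.algebraMap_eq_smul_one, sub_smul]; abel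
  rw [h2, sub_mul, h1, smul_mul_assoc, one_mul]

/-- Cauchy transform of the resolvent. -/
noncomputable def cauchyT (a : A) (r : ℝ) (w : ℂ) : A :=
  (2 * Real.pi * Complex.I : ℂ)⁻¹ • circleIntegral (fun z => (z - w)⁻¹ • resolvent a z) 0 r

/-- Riesz integral. -/
noncomputable def rieszP (a : A) (r : ℝ) : A :=
  (2 * Real.pi * Complex.I : ℂ)⁻¹ • circleIntegral (fun z => (1 : ℂ) • resolvent a z) 0 r

theorem integrable_res {a : A} {r : ℝ} (hr : 0 < r) (h : ∀ z ∈ Metric.sphere (0:ℂ) r, z ∉ spectrum ℂ a)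
    {g : ℂ → ℂ} (hg : ContinuousOn g (Metric.sphere (0:ℂ) r)) :
    CircleIntegrable (fun z => g z • resolvent a z) 0 r :=
  (hg.smul (continuousOn_resolvent' h)).circleIntegrable hr.le

theorem continuousOn_inv_sub {r : ℝ} {w : ℂ} (hw : ‖w‖ ≠ r) :
    ContinuousOn (fun z : ℂ => (z - w)⁻¹) (Metric.sphere (0:ℂ) r) := by
  refine ContinuousOn.inv₀ (by fun_prop) ?_
  intro z hz h0
  apply hw
  rw [← sub_eq_zero.1 h0]; simpa using hz

theorem sub_mul_cauchyT {a : A} {r : ℝ} (hr : 0 < r)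
    (h : ∀ z ∈ Metric.sphere (0:ℂ) r, z ∉ spectrum ℂ a) {w : ℂ} (hw : ‖w‖ ≠ r) :
    (algebraMap ℂ A w - a) * cauchyT a r w =
      ((2 * Real.pi * Complex.I : ℂ)⁻¹ * circleIntegral (fun z => (z - w)⁻¹) 0 r) • (1 : A)
        - rieszP a r := by
  have hI := integrable_res hr h (continuousOn_inv_sub hw)
  have hI1 := integrable_res hr h (g := fun _ => 1) continuousOn_const
  unfold cauchyT rieszP
  rw [mul_smul_comm, circleIntegral_mul_left' _ hI, mul_smul, ← circleIntegral.integral_smul_const,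
    ← smul_sub, ← circleIntegral.integral_sub _ hI1]
  · congr 1
    refine circleIntegral.integral_congr hr.le fun z hz => ?_
    have hzw : z - w ≠ 0 := by
      intro h0; apply hw; rw [← sub_eq_zero.1 h0]; simpa using hz
    rw [mul_smul_comm, sub_mul_resolvent' w (h z hz), smul_sub, smul_smul, inv_mul_cancel₀ hzw]
  · exact ((continuousOn_inv_sub hw).smul continuousOn_const).circleIntegrable hr.le

theorem two_pi_I_ne : (2 * Real.pi * Complex.I : ℂ) ≠ 0 := Complex.two_pi_I_ne_zero

theorem sub_mul_cauchyT_in {a : A} {r : ℝ} (hr : 0 < r)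
    (h : ∀ z ∈ Metric.sphere (0:ℂ) r, z ∉ spectrum ℂ a) {w : ℂ} (hw : ‖w‖ < r) :
    (algebraMap ℂ A w - a) * cauchyT a r w = 1 - rieszP a r := by
  rw [sub_mul_cauchyT hr h hw.ne, circleIntegral.integral_sub_inv_of_mem_ball (by simpa using hw),
    inv_mul_cancel₀ two_pi_I_ne, one_smul]

theorem sub_mul_cauchyT_out {a : A} {r : ℝ} (hr : 0 < r)
    (h : ∀ z ∈ Metric.sphere (0:ℂ) r, z ∉ spectrum ℂ a) {w : ℂ} (hw : r < ‖w‖) :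
    (algebraMap ℂ A w - a) * cauchyT a r w = - rieszP a r := by
  have hne : ∀ z ∈ Metric.closedBall (0:ℂ) r, z - w ≠ 0 := by
    intro z hz h0
    have : z = w := sub_eq_zero.1 h0
    subst this
    simp at hz; linarith
  rw [sub_mul_cauchyT hr h hw.ne',
    Complex.circleIntegral_eq_zero_of_differentiable_on_off_countable hr.le Set.countable_empty]
  · simp
  · exact ContinuousOn.inv₀ (by fun_prop) hne
  · intro z hz
    exact DifferentiableAt.inv (by fun_prop) (hne z (Metric.ball_subset_closedBall hz.1))

theorem commute_cauchyT {a b : A} {r : ℝ} (hr : 0 < r)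
    (h : ∀ z ∈ Metric.sphere (0:ℂ) r, z ∉ spectrum ℂ a) {w : ℂ} (hw : ‖w‖ ≠ r) (hb : Commute b a) :
    Commute b (cauchyT a r w) :=
  (commute_circleIntegral hb (integrable_res hr h (continuousOn_inv_sub hw))).smul_right _

theorem commute_rieszP {a b : A} {r : ℝ} (hr : 0 < r)
    (h : ∀ z ∈ Metric.sphere (0:ℂ) r, z ∉ spectrum ℂ a) (hb : Commute b a) :
    Commute b (rieszP a r) :=
  (commute_circleIntegral hb (integrable_res hr h continuousOn_const)).smul_right _

theorem rieszP_idem {a : A} {r s : ℝ} (hr : 0 < r) (hrs : r < s)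
    (h : ∀ z : ℂ, r ≤ ‖z‖ → ‖z‖ ≤ s → z ∉ spectrum ℂ a) :
    rieszP a r * rieszP a r = rieszP a r := by
  have hs : 0 < s := hr.trans hrs
  have h1 : ∀ z ∈ Metric.sphere (0:ℂ) r, z ∉ spectrum ℂ a := fun z hz => by
    have : ‖z‖ = r := by simpa using hz
    exact h z this.ge (this.le.trans hrs.le)
  have h2 : ∀ z ∈ Metric.sphere (0:ℂ) s, z ∉ spectrum ℂ a := fun z hz => by
    have : ‖z‖ = s := by simpa using hz
    exact h z (hrs.le.trans this.ge) this.le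
  have hP : rieszP a s = rieszP a r := by
    unfold rieszP
    congr 1
    refine Complex.circleIntegral_eq_of_differentiable_on_annulus_off_countable hr hrs.le
      Set.countable_empty ?_ ?_
    · refine continuousOn_const.smul (continuousOn_resolvent' ?_)
      intro z hz
      simp at hz
      exact h z hz.2 hz.1
    · intro z hz
      simp at hz
      exact (differentiableAt_const (1:ℂ)).smul (spectrum.hasDerivAt_resolvent_const_left (𝕜 := ℂ) (a := a)
        (spectrum.notMem_iff.1 (h z hz.2.le hz.1.le))).differentiableAt
  have key : (1 - rieszP a s) * rieszP a r = 0 := by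
    have hI := integrable_res hr h1 (g := fun _ => 1) continuousOn_const
    have h3 : rieszP a r = (2 * Real.pi * Complex.I : ℂ)⁻¹ •
      circleIntegral (fun z => (1 : ℂ) • resolvent a z) 0 r := rfl
    rw [h3, mul_smul_comm, circleIntegral_mul_left' _ hI]
    have h4 : circleIntegral (fun z => (1 - rieszP a s) * ((1 : ℂ) • resolvent a z)) 0 r =
        circleIntegral (fun z => cauchyT a s z) 0 r := by
      refine circleIntegral.integral_congr hr.le fun z hz => ?_
      have hz' : ‖z‖ = r := by simpa using hz
      have hzs : ‖z‖ < s := hz'.trans_lt hrs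
      have h5 := sub_mul_cauchyT_in hs h2 hzs
      have hu := spectrum.notMem_iff.1 (h1 z hz)
      have hc : Commute (algebraMap ℂ A z - a) (cauchyT a s z) :=
        commute_cauchyT hs h2 hzs.ne ((Algebra.commute_algebraMap_left z a).sub_left (Commute.refl a))
      simp only [one_smul]
      rw [← h5, hc.eq, mul_assoc]
      unfold resolvent
      rw [Ring.mul_inverse_cancel _ hu, mul_one]
    have hI2 : CircleIntegrable (resolvent a) 0 s := (continuousOn_resolvent' h2).circleIntegrable hs.le
    have hd : DifferentiableOn ℂ (cauchyT a s) (Metric.ball 0 s) := by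
      have := (hasFPowerSeriesOn_cauchy_integral (R := ⟨s, hs.le⟩) hI2 hs).differentiableOn
      have h6 : Metric.eball (0:ℂ) (ENNReal.ofNNReal ⟨s, hs.le⟩) = Metric.ball 0 s :=
        Metric.eball_coe
      rw [h6] at this
      exact this
    have hsub : Metric.closedBall (0:ℂ) r ⊆ Metric.ball 0 s := Metric.closedBall_subset_ball hrs
    rw [h4, Complex.circleIntegral_eq_zero_of_differentiable_on_off_countable hr.le Set.countable_empty,
      smul_zero]
    · exact hd.continuousOn.mono hsub
    · intro z hz
      exact hd.differentiableAt (Metric.isOpen_ball.mem_nhds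
        (hsub (Metric.ball_subset_closedBall hz.1)))
  rw [hP, sub_mul, one_mul, sub_eq_zero] at key
  exact key.symm

end Riesz

theorem notMem_spectrum_restr_iff (T : X →L[ℂ] X) (M : Submodule ℂ X) (hM : ∀ x ∈ M, T x ∈ M)
    (hc : IsClosed (M : Set X)) (w : ℂ) : w ∉ spectrum ℂ (restr T M hM) ↔
      (∀ x ∈ M, w • x - T x = 0 → x = 0) ∧ (∀ y ∈ M, ∃ x ∈ M, w • x - T x = y) := by
  have : CompleteSpace M := hc.completeSpace_coe
  rw [spectrum.notMem_iff, ContinuousLinearMap.isUnit_iff_bijective, Function.Bijective,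
    injective_iff_map_eq_zero]
  have hval : ∀ x : M, (((algebraMap ℂ (M →L[ℂ] M) w - restr T M hM) x : M) : X) = w • (x : X) - T x :=
    fun x => rfl
  refine and_congr ⟨fun h x hx h0 => ?_, fun h x h0 => ?_⟩ ⟨fun h y hy => ?_, fun h y => ?_⟩
  · have := h ⟨x, hx⟩ (Subtype.ext (by rw [hval]; exact h0))
    exact congrArg Subtype.val this
  · refine Subtype.ext (h x x.2 ?_)
    rw [← hval, h0]; rfl
  · obtain ⟨x, hx⟩ := h ⟨y, hy⟩
    refine ⟨x, x.2, ?_⟩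
    rw [← hval, hx]
  · obtain ⟨x, hx, hxy⟩ := h y y.2
    exact ⟨⟨x, hx⟩, Subtype.ext (by rw [hval]; exact hxy)⟩

theorem notMem_spectrum_iff' (T : X →L[ℂ] X) (w : ℂ) : w ∉ spectrum ℂ T ↔
      (∀ x, w • x - T x = 0 → x = 0) ∧ (∀ y, ∃ x, w • x - T x = y) := by
  rw [spectrum.notMem_iff, ContinuousLinearMap.isUnit_iff_bijective, Function.Bijective,
    injective_iff_map_eq_zero]
  rfl

theorem spectrum_eq_union (T : X →L[ℂ] X) (M N : Submodule ℂ X) (hM : ∀ x ∈ M, T x ∈ M)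
    (hN : ∀ x ∈ N, T x ∈ N) (hMc : IsClosed (M : Set X)) (hNc : IsClosed (N : Set X))
    (hMN : IsCompl M N) :
    spectrum ℂ T = spectrum ℂ (restr T M hM) ∪ spectrum ℂ (restr T N hN) := by
  have hdec : ∀ x : X, ∃ u ∈ M, ∃ v ∈ N, u + v = x := fun x =>
    Submodule.mem_sup.1 (hMN.sup_eq_top ▸ Submodule.mem_top)
  have hdis : ∀ x ∈ M, x ∈ N → x = 0 := fun x h1 h2 => Submodule.disjoint_def.1 hMN.disjoint x h1 h2
  ext w
  rw [← not_iff_not, Set.mem_union, not_or, notMem_spectrum_restr_iff T M hM hMc,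
    notMem_spectrum_restr_iff T N hN hNc, notMem_spectrum_iff']
  have hSM : ∀ x ∈ M, w • x - T x ∈ M := fun x hx => M.sub_mem (M.smul_mem _ hx) (hM x hx)
  have hSN : ∀ x ∈ N, w • x - T x ∈ N := fun x hx => N.sub_mem (N.smul_mem _ hx) (hN x hx)
  have hadd : ∀ u v : X, w • (u + v) - T (u + v) = (w • u - T u) + (w • v - T v) := by
    intro u v; rw [smul_add, map_add]; abel
  constructor
  · rintro ⟨hi, hs⟩
    refine ⟨⟨fun x _ => hi x, fun y hy => ?_⟩, ⟨fun x _ => hi x, fun y hy => ?_⟩⟩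
    · obtain ⟨x, hx⟩ := hs y
      obtain ⟨u, hu, v, hv, rfl⟩ := hdec x
      rw [hadd] at hx
      have h1 : w • v - T v = 0 := hdis _ (by
        rw [eq_sub_of_add_eq' hx]; exact M.sub_mem hy (hSM u hu)) (hSN v hv)
      exact ⟨u, hu, by rw [h1, add_zero] at hx; exact hx⟩
    · obtain ⟨x, hx⟩ := hs y
      obtain ⟨u, hu, v, hv, rfl⟩ := hdec x
      rw [hadd] at hx
      have h1 : w • u - T u = 0 := hdis _ (hSM u hu) (by
        rw [eq_sub_of_add_eq hx]; exact N.sub_mem hy (hSN v hv))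
      exact ⟨v, hv, by rw [h1, zero_add] at hx; exact hx⟩
  · rintro ⟨⟨hi, hs⟩, ⟨hi', hs'⟩⟩
    constructor
    · intro x hx
      obtain ⟨u, hu, v, hv, rfl⟩ := hdec x
      rw [hadd] at hx
      have h1 : w • u - T u = 0 := hdis _ (hSM u hu) (by
        rw [eq_neg_of_add_eq_zero_left hx]; exact N.neg_mem (hSN v hv))
      rw [h1, zero_add] at hx
      rw [hi u hu h1, hi' v hv hx, add_zero]
    · intro y
      obtain ⟨u, hu, v, hv, rfl⟩ := hdec y
      obtain ⟨x, _, hx⟩ := hs u hu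
      obtain ⟨x', _, hx'⟩ := hs' v hv
      exact ⟨x + x', by rw [hadd, hx, hx']⟩

theorem riesz_split (T : X →L[ℂ] X) {r : ℝ} (hr : 0 < r) (h : ∀ z ∈ spectrum ℂ T, ‖z‖ ≠ r) :
    ∃ (M N : Submodule ℂ X) (hM : ∀ x ∈ M, T x ∈ M) (hN : ∀ x ∈ N, T x ∈ N),
      IsClosed (M : Set X) ∧ IsClosed (N : Set X) ∧ IsCompl M N ∧
      spectrum ℂ (restr T M hM) = {z ∈ spectrum ℂ T | r ≤ ‖z‖} ∧
      spectrum ℂ (restr T N hN) = {z ∈ spectrum ℂ T | ‖z‖ < r} := by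
  have hK : IsCompact (norm '' spectrum ℂ T) := (spectrum.isCompact T).image continuous_norm
  have hmem : (norm '' spectrum ℂ T)ᶜ ∈ nhds r := by
    refine hK.isClosed.isOpen_compl.mem_nhds ?_
    rintro ⟨z, hz, hzr⟩
    exact h z hz hzr
  obtain ⟨e, he, hball⟩ := Metric.mem_nhds_iff.1 hmem
  have hann : ∀ z : ℂ, r ≤ ‖z‖ → ‖z‖ ≤ r + e / 2 → z ∉ spectrum ℂ T := by
    intro z h1 h2 hz
    refine hball (a := ‖z‖) ?_ ⟨z, hz, rfl⟩
    rw [Metric.mem_ball, Real.dist_eq, abs_of_nonneg] <;> linarith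
  have hsph : ∀ z ∈ Metric.sphere (0:ℂ) r, z ∉ spectrum ℂ T := fun z hz hz' =>
    h z hz' (by simpa using hz)
  have hidem := rieszP_idem hr (by linarith : r < r + e / 2) hann
  set P := rieszP T r with hPdef
  have hTP : Commute T P := commute_rieszP hr hsph (Commute.refl T)
  have hPP : ∀ x, P (P x) = P x := fun x => DFunLike.congr_fun hidem x
  have hTPx : ∀ x, T (P x) = P (T x) := fun x => DFunLike.congr_fun hTP.eq x
  -- N = {x | P x = x}, M = ker P
  let M : Submodule ℂ X := LinearMap.ker P.toLinearMap
  let N : Submodule ℂ X := LinearMap.ker ((1 - P : X →L[ℂ] X)).toLinearMap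
  have memM : ∀ x, x ∈ M ↔ P x = 0 := fun x => Iff.rfl
  have memN : ∀ x, x ∈ N ↔ P x = x := fun x => by
    change x - P x = 0 ↔ _
    rw [sub_eq_zero, eq_comm]
  have hMi : ∀ x ∈ M, T x ∈ M := fun x hx => by
    rw [memM] at hx ⊢; rw [← hTPx, hx, map_zero]
  have hNi : ∀ x ∈ N, T x ∈ N := fun x hx => by
    rw [memN] at hx ⊢; rw [← hTPx, hx]
  have hMc : IsClosed (M : Set X) := P.isClosed_ker
  have hNc : IsClosed (N : Set X) := (1 - P : X →L[ℂ] X).isClosed_ker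
  have hMN : IsCompl M N := by
    constructor
    · rw [Submodule.disjoint_def]
      intro x h1 h2
      rw [← (memN x).1 h2, (memM x).1 h1]
    · rw [codisjoint_iff, eq_top_iff]
      intro x _
      refine Submodule.mem_sup.2 ⟨x - P x, ?_, P x, ?_, by abel⟩
      · rw [memM, map_sub, hPP, _root_.sub_self]
      · rw [memN, hPP]
  have hunion := spectrum_eq_union T M N hMi hNi hMc hNc hMN
  -- facts on the Cauchy transform
  have hq : ∀ w : ℂ, ‖w‖ ≠ r → (∀ x, cauchyT T r w (T x) = T (cauchyT T r w x)) ∧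
      (∀ x, cauchyT T r w (P x) = P (cauchyT T r w x)) := by
    intro w hw
    have h1 : Commute T (cauchyT T r w) := commute_cauchyT hr hsph hw (Commute.refl T)
    have h2 : Commute (cauchyT T r w) P := commute_rieszP hr hsph h1.symm
    exact ⟨fun x => (DFunLike.congr_fun h1.eq x).symm, fun x => DFunLike.congr_fun h2.eq x⟩
  have hin : ∀ w : ℂ, ‖w‖ < r → w ∉ spectrum ℂ (restr T M hMi) := by
    intro w hw
    obtain ⟨c1, c2⟩ := hq w hw.ne
    have hfx : ∀ x, w • cauchyT T r w x - T (cauchyT T r w x) = x - P x := fun x =>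
      DFunLike.congr_fun (sub_mul_cauchyT_in hr hsph hw) x
    rw [notMem_spectrum_restr_iff T M hMi hMc]
    refine ⟨fun x hx h0 => ?_, fun y hy => ⟨cauchyT T r w y, ?_, ?_⟩⟩
    · have := hfx x
      rw [(memM x).1 hx, _root_.sub_zero, ← c1, ← map_smul, ← map_sub, h0, map_zero] at this
      exact this.symm
    · rw [memM, ← c2, (memM y).1 hy, map_zero]
    · rw [hfx, (memM y).1 hy, _root_.sub_zero]
  have hout : ∀ w : ℂ, r < ‖w‖ → w ∉ spectrum ℂ (restr T N hNi) := by
    intro w hw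
    obtain ⟨c1, c2⟩ := hq w hw.ne'
    have hfx : ∀ x, w • cauchyT T r w x - T (cauchyT T r w x) = -P x := fun x =>
      DFunLike.congr_fun (sub_mul_cauchyT_out hr hsph hw) x
    rw [notMem_spectrum_restr_iff T N hNi hNc]
    refine ⟨fun x hx h0 => ?_, fun y hy => ⟨cauchyT T r w (-y), ?_, ?_⟩⟩
    · have := hfx x
      rw [(memN x).1 hx, ← c1, ← map_smul, ← map_sub, h0, map_zero] at this
      exact neg_eq_zero.1 this.symm
    · rw [memN, ← c2, map_neg, (memN y).1 hy]
    · rw [hfx, map_neg, (memN y).1 hy, neg_neg]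
  refine ⟨M, N, hMi, hNi, hMc, hNc, hMN, ?_, ?_⟩
  · ext w
    constructor
    · intro hw
      exact ⟨hunion ▸ Or.inl hw, not_lt.1 fun hlt => hin w hlt hw⟩
    · rintro ⟨hw, hle⟩
      have hlt : r < ‖w‖ := lt_of_le_of_ne hle (h w hw).symm
      rw [hunion] at hw
      exact hw.resolve_right (hout w hlt)
  · ext w
    constructor
    · intro hw
      have hw' : w ∈ spectrum ℂ T := hunion ▸ Or.inr hw
      exact ⟨hw', lt_of_le_of_ne (not_lt.1 fun hlt => hout w hlt hw) (h w hw')⟩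
    · rintro ⟨hw, hlt⟩
      rw [hunion] at hw
      exact hw.resolve_left (hin w hlt)

theorem exists_radii {S C : Set ℂ} (hC : C.Countable) {e : ℝ} (he : 0 < e)
    (hsmall : ∀ z ∈ S, ‖z‖ < e → z ∈ C) (h0 : (0 : ℂ) ∈ derivedSet S) :
    ∃ R : ℕ → ℝ, ∀ m, (0 < R m ∧ R m < e ∧ ∀ z ∈ S, ‖z‖ ≠ R m) ∧
      ∃ z ∈ S, R (m+1) ≤ ‖z‖ ∧ ‖z‖ < R m := by
  let Good : ℝ → Prop := fun r => 0 < r ∧ r < e ∧ ∀ z ∈ S, ‖z‖ ≠ r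
  have hex : ∀ t : ℝ, 0 < t → ∃ r, Good r ∧ r < t := by
    intro t ht
    have hd : Dense (norm '' C)ᶜ := (hC.image norm).dense_compl ℝ
    obtain ⟨r, hr, hr0, hrt⟩ := hd.exists_between (lt_min ht he)
    refine ⟨r, ⟨hr0, hrt.trans_le (min_le_right _ _), fun z hz hzr => hr ⟨z, ?_, hzr⟩⟩,
      hrt.trans_le (min_le_left _ _)⟩
    exact hsmall z hz (hzr.trans_lt (hrt.trans_le (min_le_right _ _)))
  have hstep : ∀ r : {r // Good r}, ∃ r' : {r // Good r}, ∃ z ∈ S,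
      r'.1 ≤ ‖z‖ ∧ ‖z‖ < r.1 := by
    rintro ⟨r, hr⟩
    have hacc : AccPt (0:ℂ) (Filter.principal (S)) := h0
    obtain ⟨z, ⟨hzr, hz⟩, hne⟩ := accPt_iff_nhds.1 hacc _ (Metric.ball_mem_nhds (0:ℂ) hr.1)
    obtain ⟨r', hr', hlt⟩ := hex ‖z‖ (norm_pos_iff.2 hne)
    exact ⟨⟨r', hr'⟩, z, hz, hlt.le, by simpa using hzr⟩
  choose f hf using hstep
  obtain ⟨r₀, hr₀, _⟩ := hex 1 one_pos
  let R : ℕ → {r // Good r} := fun n => f^[n] ⟨r₀, hr₀⟩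
  have hR : ∀ m, ∃ z ∈ S, (R (m+1)).1 ≤ ‖z‖ ∧ ‖z‖ < (R m).1 := by
    intro m
    have : R (m+1) = f (R m) := Function.iterate_succ_apply' f m _
    rw [this]
    exact hf (R m)
  exact ⟨fun m => (R m).1, fun m => ⟨(R m).2, hR m⟩⟩

/-- If `T` is `g_σ^{β+1}`-invertible and not generalized Drazin invertible
(`0 ∈ acc σ(T)`), then there is a sequence of pairs in `Red T` witnessing
`g_σ^{β+1}`-invertibility, with strictly increasing spectra on the first components,
strictly decreasing spectra on the second components, and disjoint spectra. -/
theorem exists_seq_of_gInv (T : X →L[ℂ] X) (β : Ordinal)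
    (hg : GInv β T) (h0 : (0 : ℂ) ∈ derivedSet (spectrum ℂ T)) :
    ∃ (M N : ℕ → Submodule ℂ X) (hM : ∀ m, ∀ x ∈ M m, T x ∈ M m)
      (hN : ∀ m, ∀ x ∈ N m, T x ∈ N m), ∀ m : ℕ,
        IsClosed (M m : Set X) ∧ IsClosed (N m : Set X) ∧ IsCompl (M m) (N m) ∧
        IsUnit (restr T (M m) (hM m)) ∧
        cbd (spectrum ℂ (restr T (N m) (hN m))) β ⊆ {0} ∧
        spectrum ℂ (restr T (M m) (hM m)) ⊂ spectrum ℂ (restr T (M (m+1)) (hM (m+1))) ∧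
        spectrum ℂ (restr T (N (m+1)) (hN (m+1))) ⊂ spectrum ℂ (restr T (N m) (hN m)) ∧
        spectrum ℂ (restr T (M m) (hM m)) ∩ spectrum ℂ (restr T (N m) (hN m)) = ∅ := by
  obtain ⟨M₀, N₀, hM₀, hN₀, hMc₀, hNc₀, hMN₀, hu₀, hcb₀⟩ := hg
  have : CompleteSpace M₀ := hMc₀.completeSpace_coe
  have : CompleteSpace N₀ := hNc₀.completeSpace_coe
  have hun := spectrum_eq_union T M₀ N₀ hM₀ hN₀ hMc₀ hNc₀ hMN₀
  have hcount : (spectrum ℂ (restr T N₀ hN₀)).Countable :=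
    countable_of_cbd (spectrum.isClosed (𝕜 := ℂ) (restr T N₀ hN₀)) β hcb₀
  have h0M : (spectrum ℂ (restr T M₀ hM₀))ᶜ ∈ nhds (0:ℂ) :=
    (spectrum.isClosed (𝕜 := ℂ) (restr T M₀ hM₀)).isOpen_compl.mem_nhds
      ((spectrum.zero_notMem_iff ℂ).2 hu₀)
  obtain ⟨e, he, hball⟩ := Metric.mem_nhds_iff.1 h0M
  have hsmall : ∀ z ∈ spectrum ℂ T, ‖z‖ < e → z ∈ spectrum ℂ (restr T N₀ hN₀) := by
    intro z hz hze
    rw [hun] at hz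
    exact hz.resolve_left (hball (by simpa using hze))
  obtain ⟨R, hRR⟩ := exists_radii hcount he hsmall h0
  have hR := fun m => (hRR m).2
  have hg := fun m => (hRR m).1
  have hall := fun m => riesz_split T (hg m).1 (hg m).2.2
  choose M N hM hN hall using hall
  have hMc := fun m => (hall m).1
  have hNc := fun m => (hall m).2.1
  have hMN := fun m => (hall m).2.2.1
  have hsM := fun m => (hall m).2.2.2.1
  have hsN := fun m => (hall m).2.2.2.2
  refine ⟨M, N, hM, hN, fun m => ⟨hMc m, hNc m, hMN m, ?_, ?_, ?_, ?_, ?_⟩⟩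
  · rw [← spectrum.zero_notMem_iff ℂ, hsM]
    rintro ⟨_, h⟩
    have := (hg m).1
    simp only [norm_zero] at h
    linarith
  · refine (cbd_mono' ?_ β).trans hcb₀
    rw [hsN]
    rintro z ⟨hz, hlt⟩
    exact hsmall z hz (hlt.trans (hg m).2.1)
  · rw [hsM, hsM]
    obtain ⟨z, hz, h1, h2⟩ := hR m
    refine Set.ssubset_iff_subset_ne.2 ⟨fun w hw => ⟨hw.1, ((h1.trans h2.le).trans hw.2)⟩, ?_⟩
    intro heq
    have : z ∈ {z ∈ spectrum ℂ T | (R m) ≤ ‖z‖} := by rw [heq]; exact ⟨hz, h1⟩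
    exact absurd this.2 (not_le.2 h2)
  · rw [hsN, hsN]
    obtain ⟨z, hz, h1, h2⟩ := hR m
    refine Set.ssubset_iff_subset_ne.2 ⟨fun w hw => ⟨hw.1, hw.2.trans (h1.trans_lt h2)⟩, ?_⟩
    intro heq
    have : z ∈ {z ∈ spectrum ℂ T | ‖z‖ < R (m+1)} := by rw [heq]; exact ⟨hz, h2⟩
    exact absurd this.2 (not_lt.2 h1)
  · rw [hsM, hsN]
    ext z
    simp only [Set.mem_inter_iff, Set.mem_setOf_eq, Set.mem_empty_iff_false, iff_false]
    rintro ⟨⟨_, h1⟩, ⟨_, h2⟩⟩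
    linarith
end

section
/- Let X be a complex Banach space and T a bounded linear operator on X. Then T is almost invertible if and only if there exists a bounded linear operator S on X with ST = TS, S²T = S, and σ(T − T²S) at most countable. -/
open Ordinal Set

variable {X : Type*} [NormedAddCommGroup X] [NormedSpace ℂ X] [CompleteSpace X]

/-- `T` is almost invertible: there is `(M, N) ∈ Red T` (a pair of closed
`T`-invariant subspaces with `X = M ⊕ N`) such that `T_M` is invertible and
`σ(T_N)` is at most countable. -/
def AlmostInv (T : X →L[ℂ] X) : Prop :=
  ∃ (M N : Submodule ℂ X) (hM : ∀ x ∈ M, T x ∈ M) (hN : ∀ x ∈ N, T x ∈ N),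
    IsClosed (M : Set X) ∧ IsClosed (N : Set X) ∧ IsCompl M N ∧
    IsUnit (restr T M hM) ∧ (spectrum ℂ (restr T N hN)).Countable

theorem restr_coe_aux (T : X →L[ℂ] X) (M : Submodule ℂ X)
    (hM : ∀ x ∈ M, T x ∈ M) (x : M) : ((restr T M hM x : M) : X) = T x := rfl

theorem clm_ext_compl_aux {M N : Submodule ℂ X} (h : IsCompl M N) (A B : X →L[ℂ] X)
    (hM : ∀ x : M, A x = B x) (hN : ∀ x : N, A x = B x) : A = B := by
  ext x
  have hx : x ∈ M ⊔ N := by rw [h.sup_eq_top]; trivial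
  obtain ⟨y, hy, z, hz, rfl⟩ := Submodule.mem_sup.1 hx
  rw [map_add, map_add, hM ⟨y, hy⟩, hN ⟨z, hz⟩]

theorem almostInv_forward_aux (T : X →L[ℂ] X) (hT : AlmostInv T) :
      ∃ S : X →L[ℂ] X, S * T = T * S ∧ S * S * T = S ∧
        (spectrum ℂ (T - T * T * S)).Countable := by
  obtain ⟨M, N, hM, hN, cM, cN, hc, ⟨U, hU⟩, hσ⟩ := hT
  have ht : Submodule.IsTopCompl M N := Submodule.IsCompl.isTopCompl_of_isClosed hc cM cN
  have ht' : Submodule.IsTopCompl N M := Submodule.IsCompl.isTopCompl_of_isClosed hc.symm cN cM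
  obtain ⟨p, pM, pN⟩ : ∃ p : X →L[ℂ] M, (∀ x : M, p x = x) ∧ (∀ x : N, p x = 0) :=
    ⟨M.projectionOntoL N ht, fun x => by simp, fun x => by simp⟩
  obtain ⟨q, qN, qM⟩ : ∃ p : X →L[ℂ] N, (∀ x : N, p x = x) ∧ (∀ x : M, p x = 0) :=
    ⟨N.projectionOntoL M ht', fun x => by simp, fun x => by simp⟩
  let V : M →L[ℂ] M := ↑U⁻¹
  have h1 : ∀ x : M, T (V x : M) = x := fun x => by
    have : (↑U * ↑U⁻¹ : M →L[ℂ] M) x = x := by rw [U.mul_inv]; rfl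
    rw [hU] at this
    exact congrArg Subtype.val this
  have h2 : ∀ x : M, V ⟨T x, hM x x.2⟩ = x := fun x => by
    have : (↑U⁻¹ * ↑U : M →L[ℂ] M) x = x := by rw [U.inv_mul]; rfl
    rw [hU] at this
    exact this
  let S : X →L[ℂ] X := M.subtypeL ∘L V ∘L p
  have SM : ∀ x : M, S x = V x := fun x => by simp [S, pM]
  have SN : ∀ x : N, S x = 0 := fun x => by simp [S, pN]
  have STM : ∀ x : M, S (T x) = x := fun x => by
    rw [SM ⟨T x, hM x x.2⟩, h2]
  have STN : ∀ x : N, S (T x) = 0 := fun x => SN ⟨T x, hN x x.2⟩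
  refine ⟨S, ?_, ?_, ?_⟩
  · refine clm_ext_compl_aux hc _ _ (fun x => ?_) (fun x => ?_)
    · simp [STM, SM, h1]
    · simp [STN, SN]
  · refine clm_ext_compl_aux hc _ _ (fun x => ?_) (fun x => ?_)
    · simp [STM]
    · simp [STN, SN]
  · refine (hσ.insert 0).mono fun z hz => ?_
    by_contra hcon
    rw [Set.mem_insert_iff, not_or] at hcon
    obtain ⟨hz0, hzN⟩ := hcon
    rw [spectrum.notMem_iff] at hzN
    obtain ⟨W, hW⟩ := hzN
    let R : N →L[ℂ] N := ↑W⁻¹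
    have r1 : ∀ x : N, z • (R x : X) - T (R x : N) = x := fun x => by
      have : (↑W * ↑W⁻¹ : N →L[ℂ] N) x = x := by rw [W.mul_inv]; rfl
      rw [hW] at this
      exact congrArg Subtype.val this
    have r2 : ∀ x : N, R (z • x - ⟨T x, hN x x.2⟩) = x := fun x => by
      have : (↑W⁻¹ * ↑W : N →L[ℂ] N) x = x := by rw [W.inv_mul]; rfl
      rw [hW] at this
      exact this
    have AM : ∀ x : M, (algebraMap ℂ (X →L[ℂ] X) z - (T - T * T * S)) x = z • (x : X) := by
      intro x
      simp [Algebra.algebraMap_eq_smul_one, SM, h1]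
    have AN : ∀ x : N, (algebraMap ℂ (X →L[ℂ] X) z - (T - T * T * S)) x = z • (x : X) - T x := by
      intro x
      simp [Algebra.algebraMap_eq_smul_one, SN]
    let Q : X →L[ℂ] X := z⁻¹ • (M.subtypeL ∘L p) + N.subtypeL ∘L R ∘L q
    have QM : ∀ x : M, Q x = z⁻¹ • (x : X) := fun x => by simp [Q, pM, qM]
    have QN : ∀ x : N, Q x = R x := fun x => by simp [Q, pN, qN]
    apply hz
    change IsUnit _
    refine ⟨⟨_, Q, ?_, ?_⟩, rfl⟩
    · refine clm_ext_compl_aux hc _ _ (fun x => ?_) (fun x => ?_)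
      · rw [mul_apply_eq_comp, QM, map_smul, AM, smul_smul, inv_mul_cancel₀ hz0]
        simp
      · rw [mul_apply_eq_comp, QN, AN, r1]
        simp
    · refine clm_ext_compl_aux hc _ _ (fun x => ?_) (fun x => ?_)
      · rw [mul_apply_eq_comp, AM, map_smul, QM, smul_smul, mul_inv_cancel₀ hz0]
        simp
      · rw [mul_apply_eq_comp, AN]
        exact (QN (z • x - ⟨T x, hN x x.2⟩)).trans (congrArg Subtype.val (r2 x))

theorem almostInv_backward_aux (T S : X →L[ℂ] X) (hc : S * T = T * S) (hS : S * S * T = S)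
    (hσ : (spectrum ℂ (T - T * T * S)).Countable) : AlmostInv T := by
  have c : ∀ x, S (T x) = T (S x) := fun x => congrArg (fun A : X →L[ℂ] X => A x) hc
  have s : ∀ x, S (S (T x)) = S x := fun x => congrArg (fun A : X →L[ℂ] X => A x) hS
  have hM : ∀ x ∈ (1 - T * S : X →L[ℂ] X).ker, T x ∈ (1 - T * S : X →L[ℂ] X).ker := by
    intro x hx
    have hx' : x - T (S x) = 0 := hx
    change T x - T (S (T x)) = 0
    rw [c, ← map_sub, hx', map_zero]
  have hMS : ∀ x ∈ (1 - T * S : X →L[ℂ] X).ker, S x ∈ (1 - T * S : X →L[ℂ] X).ker := by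
    intro x hx
    have hx' : x - T (S x) = 0 := hx
    change S x - T (S (S x)) = 0
    rw [← c, ← c, s, _root_.sub_self]
  have hN : ∀ x ∈ (T * S : X →L[ℂ] X).ker, T x ∈ (T * S : X →L[ℂ] X).ker := by
    intro x hx
    have hx' : T (S x) = 0 := hx
    change T (S (T x)) = 0
    rw [c, hx', map_zero]
  refine ⟨(1 - T * S : X →L[ℂ] X).ker, (T * S : X →L[ℂ] X).ker, hM, hN,
    ContinuousLinearMap.isClosed_ker _, ContinuousLinearMap.isClosed_ker _, ?_, ?_, ?_⟩
  · constructor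
    · rw [Submodule.disjoint_def]
      intro x hx hx2
      have hx' : x - T (S x) = 0 := hx
      have hx2' : T (S x) = 0 := hx2
      rwa [hx2', _root_.sub_zero] at hx'
    · rw [codisjoint_iff, eq_top_iff]
      intro x _
      refine Submodule.mem_sup.2 ⟨T (S x), ?_, x - T (S x), ?_, by abel⟩
      · change T (S x) - T (S (T (S x))) = 0
        rw [← c x, s, c, _root_.sub_self]
      · change T (S (x - T (S x))) = 0
        rw [map_sub, map_sub, ← c x, s, c, _root_.sub_self]
  · refine ⟨⟨_, restr S _ hMS, ?_, ?_⟩, rfl⟩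
    · ext x
      have hx' : (x : X) - T (S x) = 0 := x.2
      exact (sub_eq_zero.1 hx').symm
    · ext x
      have hx' : (x : X) - T (S x) = 0 := x.2
      exact (c x).trans (sub_eq_zero.1 hx').symm
  · refine hσ.mono fun z hz => ?_
    by_contra hcon
    rw [spectrum.notMem_iff] at hcon
    obtain ⟨W, hW⟩ := hcon
    have hcomm : Commute (T * S) (W : X →L[ℂ] X) := by
      have hTS : Commute T S := hc.symm
      have hT' : Commute (T * S) T := (Commute.refl T).mul_left hTS.symm
      have hS' : Commute (T * S) S := hTS.mul_left (Commute.refl S)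
      rw [hW]
      exact (Algebra.commute_algebraMap_right z (T * S)).sub_right
        (hT'.sub_right ((hT'.mul_right hT').mul_right hS'))
    have hcomm' : Commute (T * S) (↑W⁻¹ : X →L[ℂ] X) := hcomm.units_inv_right
    have hR : ∀ x ∈ (T * S : X →L[ℂ] X).ker, (↑W⁻¹ : X →L[ℂ] X) x ∈ (T * S : X →L[ℂ] X).ker := by
      intro x hx
      have hx' : (T * S) x = 0 := hx
      have := congrArg (fun A : X →L[ℂ] X => A x) hcomm'.eq
      change (T * S) ((↑W⁻¹ : X →L[ℂ] X) x) = (↑W⁻¹ : X →L[ℂ] X) ((T * S) x) at this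
      change (T * S) ((↑W⁻¹ : X →L[ℂ] X) x) = 0
      rw [this, hx', map_zero]
    have hWN : ∀ x ∈ (T * S : X →L[ℂ] X).ker, (W : X →L[ℂ] X) x = z • x - T x := by
      intro x hx
      have hx' : T (S x) = 0 := hx
      rw [hW]
      simp [Algebra.algebraMap_eq_smul_one, hx']
    apply hz
    change IsUnit _
    refine ⟨⟨_, restr _ _ hR, ?_, ?_⟩, rfl⟩
    · ext x
      have h1 : (W : X →L[ℂ] X) ((↑W⁻¹ : X →L[ℂ] X) x) = x := by
        rw [← mul_apply_eq_comp, W.mul_inv]; rfl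
      rw [hWN _ (hR x x.2)] at h1
      exact h1
    · ext x
      have h1 : (↑W⁻¹ : X →L[ℂ] X) ((W : X →L[ℂ] X) x) = x := by
        rw [← mul_apply_eq_comp, W.inv_mul]; rfl
      rw [hWN _ x.2] at h1
      exact h1

/-- `T` is almost invertible iff there is `S` commuting with `T` with `S²T = S` and
`σ(T - T²S)` at most countable. -/
theorem almostInv_iff_exists_pseudoinverse (T : X →L[ℂ] X) :
    AlmostInv T ↔
      ∃ S : X →L[ℂ] X, S * T = T * S ∧ S * S * T = S ∧
        (spectrum ℂ (T - T * T * S)).Countable := by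
  exact ⟨almostInv_forward_aux T, fun ⟨S, h1, h2, h3⟩ => almostInv_backward_aux T S h1 h2 h3⟩
end

section
/- Let X be a complex Banach space and T a bounded linear operator on X. Then T is almost invertible if and only if there exists an at most countable set σ̃ ⊆ σ(T) that is both closed and open in the subspace topology of σ(T) and satisfies 0 ∉ σ(T) \ σ̃. -/
open Ordinal Set

variable {X : Type*} [NormedAddCommGroup X] [NormedSpace ℂ X] [CompleteSpace X]

section RieszHelpers

open Metric Complex

theorem clm_circleIntegral_comm {A B : Type*} [NormedAddCommGroup A] [NormedSpace ℂ A]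
    [CompleteSpace A] [NormedAddCommGroup B] [NormedSpace ℂ B] [CompleteSpace B]
    (L : A →L[ℂ] B) {f : ℂ → A} {c : ℂ} {r : ℝ} (hf : CircleIntegrable f c r) :
    L (∮ z in C(c, r), f z) = ∮ z in C(c, r), L (f z) := by
  unfold circleIntegral
  rw [← L.intervalIntegral_comp_comm hf.out]
  simp

variable {A : Type*} [NormedRing A] [NormedAlgebra ℂ A] [CompleteSpace A]

theorem resolvent_mul_left_id {a : A} {z : ℂ} (hz : z ∉ spectrum ℂ a) :
    (algebraMap ℂ A z - a) * resolvent a z = 1 :=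
  Ring.mul_inverse_cancel _ (spectrum.notMem_iff.mp hz)

theorem resolvent_mul_right_id {a : A} {z : ℂ} (hz : z ∉ spectrum ℂ a) :
    resolvent a z * (algebraMap ℂ A z - a) = 1 :=
  Ring.inverse_mul_cancel _ (spectrum.notMem_iff.mp hz)

theorem resolvent_differentiableAt {a : A} {z : ℂ} (hz : z ∉ spectrum ℂ a) :
    DifferentiableAt ℂ (resolvent a) z :=
  (spectrum.hasDerivAt_resolvent_const_left (spectrum.notMem_iff.mp hz)).differentiableAt

theorem resolvent_continuousOn {a : A} {S : Set ℂ} (hS : ∀ z ∈ S, z ∉ spectrum ℂ a) :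
    ContinuousOn (resolvent a) S := fun z hz =>
  (resolvent_differentiableAt (hS z hz)).continuousAt.continuousWithinAt

theorem cauchy_kernel_continuousOn {w : ℂ} {r : ℝ} (hw : ‖w‖ ≠ r) :
    ContinuousOn (fun z : ℂ => (z - w)⁻¹) (sphere 0 r) := by
  refine ContinuousOn.inv₀ (by fun_prop) ?_
  intro z hz h
  rw [sub_eq_zero] at h
  subst h
  simp at hz
  exact hw hz

theorem cauchy_resolvent_left {a : A} {r : ℝ} (hr : 0 < r)
    (hs : ∀ z ∈ sphere (0 : ℂ) r, z ∉ spectrum ℂ a) {w : ℂ} (hw : ‖w‖ ≠ r) :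
    (algebraMap ℂ A w - a) * (∮ z in C(0, r), (z - w)⁻¹ • resolvent a z) =
      (∮ z in C(0, r), (z - w)⁻¹) • (1 : A) - ∮ z in C(0, r), resolvent a z := by
  have hk := cauchy_kernel_continuousOn hw
  have hc := resolvent_continuousOn hs
  have h1 := clm_circleIntegral_comm (ContinuousLinearMap.mul ℂ A (algebraMap ℂ A w - a))
    ((hk.smul hc).circleIntegrable hr.le)
  simp only [ContinuousLinearMap.mul_apply'] at h1
  have hk1 : CircleIntegrable (fun z : ℂ => (z - w)⁻¹ • (1 : A)) 0 r :=
    (hk.smul continuousOn_const).circleIntegrable hr.le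
  rw [← circleIntegral.integral_smul_const, ← circleIntegral.integral_sub hk1
    (hc.circleIntegrable hr.le)]
  refine h1.trans (circleIntegral.integral_congr hr.le ?_)
  intro z hz
  have hne : z - w ≠ 0 := by
    intro h
    rw [sub_eq_zero] at h
    subst h
    simp at hz
    exact hw hz
  have h2 := resolvent_mul_left_id (hs z hz)
  have h3 : (algebraMap ℂ A w - a) * resolvent a z = 1 - (z - w) • resolvent a z := by
    rw [← h2, Algebra.smul_def, map_sub]
    noncomm_ring
  simp only [Pi.smul_apply', mul_smul_comm, h3, smul_sub, smul_smul, inv_mul_cancel₀ hne, one_smul]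

theorem cauchy_resolvent_right {a : A} {r : ℝ} (hr : 0 < r)
    (hs : ∀ z ∈ sphere (0 : ℂ) r, z ∉ spectrum ℂ a) {w : ℂ} (hw : ‖w‖ ≠ r) :
    (∮ z in C(0, r), (z - w)⁻¹ • resolvent a z) * (algebraMap ℂ A w - a) =
      (∮ z in C(0, r), (z - w)⁻¹) • (1 : A) - ∮ z in C(0, r), resolvent a z := by
  have hk := cauchy_kernel_continuousOn hw
  have hc := resolvent_continuousOn hs
  have h1 := clm_circleIntegral_comm ((ContinuousLinearMap.mul ℂ A).flip (algebraMap ℂ A w - a))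
    ((hk.smul hc).circleIntegrable hr.le)
  simp only [ContinuousLinearMap.mul_apply', ContinuousLinearMap.flip_apply] at h1
  have hk1 : CircleIntegrable (fun z : ℂ => (z - w)⁻¹ • (1 : A)) 0 r :=
    (hk.smul continuousOn_const).circleIntegrable hr.le
  rw [← circleIntegral.integral_smul_const, ← circleIntegral.integral_sub hk1
    (hc.circleIntegrable hr.le)]
  refine h1.trans (circleIntegral.integral_congr hr.le ?_)
  intro z hz
  have hne : z - w ≠ 0 := by
    intro h
    rw [sub_eq_zero] at h
    subst h
    simp at hz
    exact hw hz
  have h2 := resolvent_mul_right_id (hs z hz)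
  have h3 : resolvent a z * (algebraMap ℂ A w - a) = 1 - (z - w) • resolvent a z := by
    rw [← h2, Algebra.smul_def, Algebra.commutes, map_sub]
    noncomm_ring
  simp only [Pi.smul_apply', smul_mul_assoc, h3, smul_sub, smul_smul, inv_mul_cancel₀ hne, one_smul]

theorem cauchy_kernel_outside {w : ℂ} {r : ℝ} (hr : 0 < r) (hw : r < ‖w‖) :
    (∮ z in C(0, r), (z - w)⁻¹) = 0 := by
  have hne : ∀ z ∈ closedBall (0 : ℂ) r, z - w ≠ 0 := by
    intro z hz h
    rw [sub_eq_zero] at h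
    subst h
    simp at hz
    linarith
  refine Complex.circleIntegral_eq_zero_of_differentiable_on_off_countable hr.le
    Set.countable_empty (ContinuousOn.inv₀ (by fun_prop) hne) ?_
  intro z hz
  exact DifferentiableAt.inv (by fun_prop) (hne z (ball_subset_closedBall hz.1))

/-- Existence of the Riesz projection for a circle around `0` missing the spectrum. -/
theorem exists_riesz_projection (a : A) {r : ℝ} (hr : 0 < r)
    (hs : ∀ z ∈ sphere (0 : ℂ) r, z ∉ spectrum ℂ a) :
    ∃ p : A, p * p = p ∧ p * a = a * p ∧
      (∀ w : ℂ, r < ‖w‖ → ∃ b, (algebraMap ℂ A w - a) * b = p ∧ b * (algebraMap ℂ A w - a) = p) ∧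
      (∃ b, a * b = 1 - p ∧ b * a = 1 - p) := by
  -- a slightly larger radius
  obtain ⟨R, hrR, hann⟩ : ∃ R, r < R ∧ ∀ z : ℂ, r ≤ ‖z‖ → ‖z‖ ≤ R → z ∉ spectrum ℂ a := by
    have hcl : IsClosed ((fun z : ℂ => ‖z‖) '' spectrum ℂ a) :=
      ((spectrum.isCompact a).image continuous_norm).isClosed
    have hmem : r ∈ ((fun z : ℂ => ‖z‖) '' spectrum ℂ a)ᶜ := by
      rintro ⟨z, hz, hzr⟩
      exact hs z (by simpa using hzr) hz
    obtain ⟨ε, hε, hb⟩ := Metric.isOpen_iff.1 hcl.isOpen_compl r hmem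
    refine ⟨r + ε / 2, by linarith, fun z h1 h2 hz => ?_⟩
    refine (hb (?_ : ‖z‖ ∈ ball r ε)) ⟨z, hz, rfl⟩
    rw [mem_ball, Real.dist_eq, abs_lt]
    constructor <;> linarith
  have hR : 0 < R := hr.trans hrR
  have hsR : ∀ z ∈ sphere (0 : ℂ) R, z ∉ spectrum ℂ a := fun z hz => by
    have : ‖z‖ = R := by simpa using hz
    exact hann z (by linarith) this.le
  have hJ : (∮ z in C(0, R), resolvent a z) = ∮ z in C(0, r), resolvent a z := by
    refine Complex.circleIntegral_eq_of_differentiable_on_annulus_off_countable hr hrR.le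
      Set.countable_empty (resolvent_continuousOn ?_) ?_
    · intro z hz
      simp at hz
      exact hann z hz.2 hz.1
    · intro z hz
      simp at hz
      exact resolvent_differentiableAt (hann z hz.2.le hz.1.le)
  have hc0 : (2 * Real.pi * I : ℂ) ≠ 0 := by simp [Real.pi_ne_zero]
  set c : ℂ := 2 * Real.pi * I with hc
  set J := ∮ z in C(0, r), resolvent a z with hJdef
  have hin : ∀ w : ℂ, ‖w‖ < R → (algebraMap ℂ A w - a) *
      (∮ z in C(0, R), (z - w)⁻¹ • resolvent a z) = c • 1 - J := by
    intro w hw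
    rw [cauchy_resolvent_left hR hsR hw.ne, hJ,
      circleIntegral.integral_sub_inv_of_mem_ball (by simpa using hw)]
  have hin' : ∀ w : ℂ, ‖w‖ < R → 
      (∮ z in C(0, R), (z - w)⁻¹ • resolvent a z) * (algebraMap ℂ A w - a) = c • 1 - J := by
    intro w hw
    rw [cauchy_resolvent_right hR hsR hw.ne, hJ,
      circleIntegral.integral_sub_inv_of_mem_ball (by simpa using hw)]
  have hidem : J * (c • 1 - J) = 0 := by
    have h1 := clm_circleIntegral_comm ((ContinuousLinearMap.mul ℂ A).flip (c • 1 - J))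
      ((resolvent_continuousOn hs).circleIntegrable hr.le)
    simp only [ContinuousLinearMap.mul_apply', ContinuousLinearMap.flip_apply] at h1
    rw [hJdef, h1]
    have h2 : (∮ z in C(0, r), resolvent a z * (c • 1 - J)) =
        ∮ w in C(0, r), (∮ z in C(0, R), (z - w)⁻¹ • resolvent a z) := by
      refine circleIntegral.integral_congr hr.le ?_
      intro w hw
      have hwr : ‖w‖ = r := by simpa using hw
      simp only
      rw [← hin w (by linarith), ← mul_assoc, resolvent_mul_right_id (hs w hw), one_mul]
    rw [h2]
    have hps := hasFPowerSeriesOn_cauchy_integral (R := ⟨R, hR.le⟩) (c := 0)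
      ((resolvent_continuousOn hsR).circleIntegrable hR.le) hR
    have hd : ∀ w ∈ ball (0 : ℂ) R, DifferentiableAt ℂ
        (fun w => ∮ z in C(0, R), (z - w)⁻¹ • resolvent a z) w := by
      intro w hw
      have h3 := (hps.differentiableOn.differentiableAt
        (Metric.isOpen_eball.mem_nhds (x := w) (by
          rw [Metric.mem_eball, edist_dist]
          have : dist w 0 < R := hw
          exact (ENNReal.ofReal_lt_coe_iff (by exact dist_nonneg)).2 this))).const_smul c
      refine h3.congr_of_eventuallyEq (Filter.Eventually.of_forall fun x => ?_)
      exact (smul_inv_smul₀ hc0 _).symm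
    have hsub : closedBall (0 : ℂ) r ⊆ ball 0 R := closedBall_subset_ball hrR
    exact Complex.circleIntegral_eq_zero_of_differentiable_on_off_countable hr.le
      Set.countable_empty (fun z hz => (hd z (hsub hz)).continuousAt.continuousWithinAt)
      (fun z hz => hd z (hsub (ball_subset_closedBall hz.1)))
  have hJJ : J * J = c • J := by
    have : J * (c • 1 - J) = c • J - J * J := by rw [_root_.mul_sub, mul_smul_comm, mul_one]
    rw [this, sub_eq_zero] at hidem
    exact hidem.symm
  have hcomm : J * a = a * J := by
    have h0 := hin 0 (by simpa using hR)
    have h0' := hin' 0 (by simpa using hR)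
    set G := ∮ z in C(0, R), (z - 0)⁻¹ • resolvent a z
    simp only [map_zero, _root_.zero_sub] at h0 h0'
    have h1 : J = c • 1 + a * G := by
      rw [neg_mul] at h0
      rw [← sub_eq_zero] at h0 ⊢
      rw [← h0]; abel
    have h2 : J = c • 1 + G * a := by
      rw [mul_neg] at h0'
      rw [← sub_eq_zero] at h0' ⊢
      rw [← h0']; abel
    calc J * a = (c • 1 + a * G) * a := by rw [← h1]
      _ = a * (c • 1 + G * a) := by
        rw [add_mul, mul_add, smul_mul_assoc, mul_smul_comm, one_mul, mul_one, mul_assoc]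
      _ = a * J := by rw [← h2]
  refine ⟨c⁻¹ • J, ?_, ?_, ?_, ?_⟩
  · rw [smul_mul_smul_comm, hJJ, smul_smul, mul_assoc, inv_mul_cancel₀ hc0, mul_one]
  · rw [smul_mul_assoc, mul_smul_comm, hcomm]
  · intro w hw
    refine ⟨-c⁻¹ • (∮ z in C(0, r), (z - w)⁻¹ • resolvent a z), ?_, ?_⟩
    · rw [mul_smul_comm, cauchy_resolvent_left hr hs hw.ne', cauchy_kernel_outside hr hw]
      simp [hJdef]
    · rw [smul_mul_assoc, cauchy_resolvent_right hr hs hw.ne', cauchy_kernel_outside hr hw]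
      simp [hJdef]
  · have h0 := hin 0 (by simpa using hR)
    have h0' := hin' 0 (by simpa using hR)
    refine ⟨-c⁻¹ • (∮ z in C(0, R), (z - 0)⁻¹ • resolvent a z), ?_, ?_⟩
    · rw [map_zero, _root_.zero_sub, neg_mul] at h0
      rw [mul_smul_comm, neg_smul, ← smul_neg, h0, smul_sub, inv_smul_smul₀ hc0]
    · rw [map_zero, _root_.zero_sub, mul_neg] at h0'
      rw [smul_mul_assoc, neg_smul, ← smul_neg, h0', smul_sub, inv_smul_smul₀ hc0]

end RieszHelpers

section OperatorHelpers

/-- Resolvent points of the restriction to the range of a commuting idempotent. -/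
theorem notMem_spectrum_restr_range {T p b : X →L[ℂ] X} (hp : p * p = p) (hc : p * T = T * p)
    {w : ℂ} (h1 : (algebraMap ℂ (X →L[ℂ] X) w - T) * b * p = p)
    (h2 : b * (algebraMap ℂ (X →L[ℂ] X) w - T) * p = p)
    (hN : ∀ x ∈ LinearMap.range p.toLinearMap, T x ∈ LinearMap.range p.toLinearMap) :
    w ∉ spectrum ℂ (restr T (LinearMap.range p.toLinearMap) hN) := by
  have hpx : ∀ x ∈ LinearMap.range p.toLinearMap, p x = x := by
    rintro _ ⟨y, rfl⟩
    exact DFunLike.congr_fun hp y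
  have hcx : ∀ x, p (T x) = T (p x) := fun x => DFunLike.congr_fun hc x
  have h1x : ∀ x, w • b (p x) - T (b (p x)) = p x := fun x => by
    simpa [Algebra.algebraMap_eq_smul_one] using DFunLike.congr_fun h1 x
  have h2x : ∀ x, b (w • p x - T (p x)) = p x := fun x => by
    simpa [Algebra.algebraMap_eq_smul_one] using DFunLike.congr_fun h2 x
  rw [spectrum.notMem_iff]
  let B : LinearMap.range p.toLinearMap →L[ℂ] LinearMap.range p.toLinearMap :=
    ((p * b).comp (LinearMap.range p.toLinearMap).subtypeL).codRestrict _
      (fun x => ⟨b x, rfl⟩)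
  have hB : ∀ x, ((B x : LinearMap.range p.toLinearMap) : X) = p (b x) := fun x => rfl
  have hr : ∀ x, ((restr T (LinearMap.range p.toLinearMap) hN x :
    LinearMap.range p.toLinearMap) : X) = T x := fun x => rfl
  refine isUnit_iff_exists.2 ⟨B, ?_, ?_⟩
  · ext x
    have := congrArg p (h1x x)
    rw [map_sub, map_smul, hcx] at this
    simp [Algebra.algebraMap_eq_smul_one, hB, hr]
    simpa [hpx x x.2] using this
  · ext x
    have := congrArg p (h2x x)
    simp only [hpx x x.2] at this
    simpa [Algebra.algebraMap_eq_smul_one, hB, hr] using this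

theorem spectrum_subset_union {T : X →L[ℂ] X} {M N : Submodule ℂ X}
    (hM : ∀ x ∈ M, T x ∈ M) (hN : ∀ x ∈ N, T x ∈ N) (h : IsCompl M N) :
    spectrum ℂ T ⊆ spectrum ℂ (restr T M hM) ∪ spectrum ℂ (restr T N hN) := by
  intro z hz
  by_contra hcon
  rw [Set.mem_union, not_or, spectrum.notMem_iff, spectrum.notMem_iff] at hcon
  refine (spectrum.notMem_iff.2 ?_) hz
  have key : ∀ (K : Submodule ℂ X) (hK : ∀ x ∈ K, T x ∈ K),
      IsUnit (algebraMap ℂ (K →L[ℂ] K) z - restr T K hK) →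
      (∀ x ∈ K, z • x - T x = 0 → x = 0) ∧ (∀ y ∈ K, ∃ x ∈ K, z • x - T x = y) := by
    intro K hK hu
    obtain ⟨B, hB1, hB2⟩ := isUnit_iff_exists.1 hu
    have hr : ∀ x : K, ((restr T K hK x : K) : X) = T x := fun x => rfl
    constructor
    · intro x hx h0
      have h3 := DFunLike.congr_fun hB2 ⟨x, hx⟩
      have h4 : (algebraMap ℂ (K →L[ℂ] K) z - restr T K hK) ⟨x, hx⟩ = 0 := by
        apply Subtype.ext
        simpa [Algebra.algebraMap_eq_smul_one, hr] using h0
      rw [show (B * (algebraMap ℂ (K →L[ℂ] K) z - restr T K hK)) ⟨x, hx⟩ =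
        B ((algebraMap ℂ (K →L[ℂ] K) z - restr T K hK) ⟨x, hx⟩) from rfl, h4] at h3
      simpa using (congrArg Subtype.val h3).symm
    · intro y hy
      refine ⟨B ⟨y, hy⟩, (B ⟨y, hy⟩).2, ?_⟩
      have h3 := congrArg Subtype.val (DFunLike.congr_fun hB1 ⟨y, hy⟩)
      simpa [Algebra.algebraMap_eq_smul_one, hr] using h3
  obtain ⟨iM, sM⟩ := key M hM hcon.1
  obtain ⟨iN, sN⟩ := key N hN hcon.2
  have dec : ∀ x : X, ∃ m ∈ M, ∃ n ∈ N, m + n = x := fun x =>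
    Submodule.mem_sup.1 (h.sup_eq_top ▸ Submodule.mem_top)
  have happ : ∀ x, (algebraMap ℂ (X →L[ℂ] X) z - T) x = z • x - T x := fun x => by
    simp [Algebra.algebraMap_eq_smul_one]
  rw [ContinuousLinearMap.isUnit_iff_bijective]
  constructor
  · rw [injective_iff_map_eq_zero]
    intro x hx
    rw [happ] at hx
    obtain ⟨m, hm, n, hn, rfl⟩ := dec x
    have hm' : z • m - T m ∈ M := M.sub_mem (M.smul_mem _ hm) (hM m hm)
    have hn' : z • n - T n ∈ N := N.sub_mem (N.smul_mem _ hn) (hN n hn)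
    have hsum : (z • m - T m) + (z • n - T n) = 0 := by
      rw [← hx, smul_add, map_add]; abel
    have hm0 : z • m - T m = 0 := by
      refine Submodule.disjoint_def.1 h.disjoint _ hm' ?_
      rw [eq_neg_of_add_eq_zero_left hsum]
      exact N.neg_mem hn'
    have hn0 : z • n - T n = 0 := by rwa [hm0, zero_add] at hsum
    rw [iM m hm hm0, iN n hn hn0, add_zero]
  · intro y
    obtain ⟨m, hm, n, hn, rfl⟩ := dec y
    obtain ⟨m', -, e1⟩ := sM m hm
    obtain ⟨n', -, e2⟩ := sN n hn
    refine ⟨m' + n', ?_⟩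
    rw [happ, ← e1, ← e2, smul_add, map_add]; abel

theorem exists_circle_avoiding {S : Set ℂ} {ε : ℝ} (hε : 0 < ε)
    (hS : (S ∩ Metric.ball 0 ε).Countable) :
    ∃ r, 0 < r ∧ r < ε ∧ ∀ z ∈ Metric.sphere (0 : ℂ) r, z ∉ S := by
  by_contra! hcon
  have hsub : Set.Ioo 0 ε ⊆ (fun z : ℂ => ‖z‖) '' (S ∩ Metric.ball 0 ε) := by
    intro r hr
    obtain ⟨z, hz, hzS⟩ := hcon r hr.1 hr.2
    have hzr : ‖z‖ = r := by simpa using hz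
    exact ⟨z, ⟨hzS, by simpa [hzr] using hr.2⟩, hzr⟩
  exact (Cardinal.Real.Ioo_countable_iff.1 ((hS.image _).mono hsub)).not_gt hε

theorem almostInv_of_countable_near_zero {T : X →L[ℂ] X} {ε : ℝ} (hε : 0 < ε)
    (hS : (spectrum ℂ T ∩ Metric.ball 0 ε).Countable) : AlmostInv T := by
  obtain ⟨r, hr, hrε, hs⟩ := exists_circle_avoiding hε hS
  obtain ⟨p, hp, hc, hout, b0, hb1, hb2⟩ := exists_riesz_projection T hr hs
  have hq : (1 - p) * (1 - p) = 1 - p := by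
    rw [_root_.mul_sub, sub_mul, sub_mul, hp]; simp
  have hqc : (1 - p) * T = T * (1 - p) := by rw [sub_mul, _root_.mul_sub, hc]; simp
  have hinv : ∀ q : X →L[ℂ] X, q * T = T * q →
      ∀ x ∈ LinearMap.range q.toLinearMap, T x ∈ LinearMap.range q.toLinearMap := by
    rintro q hqT _ ⟨y, rfl⟩
    exact ⟨T y, DFunLike.congr_fun hqT y⟩
  have hclosed : ∀ q : X →L[ℂ] X, q * q = q →
      IsClosed (LinearMap.range q.toLinearMap : Set X) := by
    intro q hqq
    have : (LinearMap.range q.toLinearMap : Set X) = {x | q x = x} := by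
      ext x
      constructor
      · rintro ⟨y, rfl⟩
        exact DFunLike.congr_fun hqq y
      · intro hx
        exact ⟨x, hx⟩
    rw [this]
    exact isClosed_eq q.continuous continuous_id
  refine ⟨LinearMap.range (1 - p).toLinearMap, LinearMap.range p.toLinearMap,
    hinv _ hqc, hinv _ hc, hclosed _ hq, hclosed _ hp, ?_, ?_, ?_⟩
  · constructor
    · rw [Submodule.disjoint_def]
      rintro _ ⟨y, rfl⟩ ⟨x, hx⟩
      have hx' : p x = y - p y := hx
      have hpp : ∀ u, p (p u) = p u := fun u => DFunLike.congr_fun hp u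
      have : p x = 0 := by
        rw [← hpp x, hx', map_sub, hpp, _root_.sub_self]
      rw [← hx]; exact this
    · rw [codisjoint_iff, eq_top_iff]
      intro x _
      exact Submodule.mem_sup.2 ⟨(1 - p) x, ⟨x, rfl⟩, p x, ⟨x, rfl⟩, by simp⟩
  · have h := notMem_spectrum_restr_range (w := 0) (b := -b0) hq hqc
      (by rw [map_zero, _root_.zero_sub, neg_mul_neg, hb1, hq])
      (by rw [map_zero, _root_.zero_sub, neg_mul_neg, hb2, hq]) (hinv _ hqc)
    exact spectrum.zero_notMem_iff ℂ |>.1 h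
  · refine hS.mono ?_
    intro w hw
    refine ⟨?_, ?_⟩
    · by_contra hwT
      refine notMem_spectrum_restr_range (b := resolvent T w) hp hc ?_ ?_ (hinv _ hc) hw
      · rw [resolvent_mul_left_id hwT, one_mul]
      · rw [resolvent_mul_right_id hwT, one_mul]
    · by_contra hwb
      have hwn : r < ‖w‖ := by
        simp at hwb
        linarith
      obtain ⟨b, h1, h2⟩ := hout w hwn
      exact notMem_spectrum_restr_range (b := b) hp hc (by rw [h1, hp]) (by rw [h2, hp])
        (hinv _ hc) hw

end OperatorHelpers

/-- `T` is almost invertible iff there is an at most countable spectral set `σ̃` of `T`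
(a subset of `σ(T)` clopen in the subspace topology of `σ(T)`) with `0 ∉ σ(T) \ σ̃`. -/
theorem almostInv_iff_exists_countable_spectralSet (T : X →L[ℂ] X) :
    AlmostInv T ↔
      ∃ s : Set ℂ, s ⊆ spectrum ℂ T ∧ s.Countable ∧
        IsClopen (Subtype.val ⁻¹' s : Set (spectrum ℂ T)) ∧
        (0 : ℂ) ∉ spectrum ℂ T \ s := by
  constructor
  · rintro ⟨M, N, hM, hN, hMc, hNc, hMN, hu, hcount⟩
    haveI : CompleteSpace M := hMc.completeSpace_coe
    have h0 : (0 : ℂ) ∈ (spectrum ℂ (restr T M hM))ᶜ := (spectrum.zero_notMem_iff ℂ).2 hu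
    obtain ⟨ε, hε, hb⟩ := Metric.isOpen_iff.1
      (spectrum.isClosed (𝕜 := ℂ) (restr T M hM)).isOpen_compl 0 h0
    have hS : (spectrum ℂ T ∩ Metric.ball 0 ε).Countable := by
      refine hcount.mono ?_
      rintro z ⟨hz, hzb⟩
      exact (spectrum_subset_union hM hN hMN hz).resolve_left (hb hzb)
    obtain ⟨r, hr, hrε, hs⟩ := exists_circle_avoiding hε hS
    refine ⟨spectrum ℂ T ∩ Metric.ball 0 r, Set.inter_subset_left,
      hS.mono (Set.inter_subset_inter_right _ (Metric.ball_subset_ball hrε.le)), ⟨?_, ?_⟩, ?_⟩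
    · have : (Subtype.val ⁻¹' (spectrum ℂ T ∩ Metric.ball 0 r) : Set (spectrum ℂ T)) =
          Subtype.val ⁻¹' (Metric.closedBall 0 r) := by
        ext ⟨z, hz⟩
        have hne : ‖z‖ ≠ r := fun h => hs z (by simpa using h) hz
        simp only [Set.mem_preimage, Set.mem_inter_iff, hz, true_and, mem_ball_zero_iff,
          mem_closedBall_zero_iff]
        exact ⟨le_of_lt, fun h => lt_of_le_of_ne h hne⟩
      rw [this]
      exact Metric.isClosed_closedBall.preimage continuous_subtype_val
    · have : (Subtype.val ⁻¹' (spectrum ℂ T ∩ Metric.ball 0 r) : Set (spectrum ℂ T)) =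
          Subtype.val ⁻¹' (Metric.ball 0 r) := by
        ext ⟨z, hz⟩
        simp [hz]
      rw [this]
      exact Metric.isOpen_ball.preimage continuous_subtype_val
    · rintro ⟨h1, h2⟩
      exact h2 ⟨h1, Metric.mem_ball_self hr⟩
  · rintro ⟨s, -, hscount, hclopen, h0⟩
    obtain ⟨U, hU, hUs⟩ := isOpen_induced_iff.1 hclopen.isOpen
    by_cases hz : (0 : ℂ) ∈ spectrum ℂ T
    · have h0s : (0 : ℂ) ∈ s := by
        by_contra h
        exact h0 ⟨hz, h⟩
      have h0U : (0 : ℂ) ∈ U := by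
        have : (⟨0, hz⟩ : spectrum ℂ T) ∈ (Subtype.val ⁻¹' U : Set (spectrum ℂ T)) := by
          rw [hUs]; exact h0s
        exact this
      obtain ⟨ε, hε, hb⟩ := Metric.isOpen_iff.1 hU 0 h0U
      refine almostInv_of_countable_near_zero hε (hscount.mono ?_)
      rintro z ⟨hzT, hzb⟩
      have : (⟨z, hzT⟩ : spectrum ℂ T) ∈ (Subtype.val ⁻¹' s : Set (spectrum ℂ T)) := by
        rw [← hUs]; exact hb hzb
      exact this
    · obtain ⟨ε, hε, hb⟩ := Metric.isOpen_iff.1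
        (spectrum.isClosed (𝕜 := ℂ) T).isOpen_compl 0 hz
      refine almostInv_of_countable_near_zero hε (Set.countable_empty.mono ?_)
      rintro z ⟨hzT, hzb⟩
      exact hb hzb hzT
end

section
/- Let X be a complex Banach space and let T, R be bounded linear operators on X such that TR = RT = 0. If both T and R are almost invertible, then T + R is almost invertible. -/
open Ordinal Set

variable {X : Type*} [NormedAddCommGroup X] [NormedSpace ℂ X] [CompleteSpace X]

lemma restr_isUnit_iff (T : X →L[ℂ] X) (M : Submodule ℂ X) (hM : ∀ x ∈ M, T x ∈ M)
    (hc : IsClosed (M : Set X)) :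
    IsUnit (restr T M hM) ↔ (∀ x ∈ M, T x = 0 → x = 0) ∧ (∀ y ∈ M, ∃ x ∈ M, T x = y) := by
  haveI : CompleteSpace M := hc.completeSpace_coe
  rw [ContinuousLinearMap.isUnit_iff_bijective]
  have hcoe : ∀ x : M, ((restr T M hM x : M) : X) = T x := fun _ => rfl
  constructor
  · rintro ⟨hi, hs⟩
    refine ⟨fun x hx h => ?_, fun y hy => ?_⟩
    · have : (⟨x, hx⟩ : M) = 0 := by
        apply hi
        rw [map_zero]
        exact Subtype.ext h
      exact congrArg Subtype.val this
    · obtain ⟨x, hx⟩ := hs ⟨y, hy⟩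
      exact ⟨x, x.2, congrArg Subtype.val hx⟩
  · rintro ⟨hi, hs⟩
    refine ⟨(injective_iff_map_eq_zero _).2 fun x h => ?_, fun y => ?_⟩
    · exact Subtype.ext (hi x x.2 (congrArg Subtype.val h))
    · obtain ⟨x, hx, h⟩ := hs y y.2
      exact ⟨⟨x, hx⟩, Subtype.ext h⟩

lemma restr_notMem_spectrum_iff (T : X →L[ℂ] X) (M : Submodule ℂ X) (hM : ∀ x ∈ M, T x ∈ M)
    (hc : IsClosed (M : Set X)) (l : ℂ) :
    l ∉ spectrum ℂ (restr T M hM) ↔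
      (∀ x ∈ M, l • x - T x = 0 → x = 0) ∧ (∀ y ∈ M, ∃ x ∈ M, l • x - T x = y) := by
  rw [spectrum.notMem_iff]
  exact restr_isUnit_iff (l • (1 : X →L[ℂ] X) - T) M
    (fun x hx => M.sub_mem (M.smul_mem l hx) (hM x hx)) hc

lemma aux_inter (T R : X →L[ℂ] X) (M₂ N₁ N₂ : Submodule ℂ X)
    (hc : IsCompl M₂ N₂) (hTM : ∀ x ∈ M₂, T x = 0) (hTN : ∀ x ∈ N₂, T x ∈ N₂) (l : ℂ) (hl : l ≠ 0)
    (h : (∀ x ∈ N₁, l • x - T x = 0 → x = 0) ∧ (∀ y ∈ N₁, ∃ x ∈ N₁, l • x - T x = y)) :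
    (∀ x ∈ N₁ ⊓ N₂, l • x - T x = 0 → x = 0) ∧
      (∀ y ∈ N₁ ⊓ N₂, ∃ x ∈ N₁ ⊓ N₂, l • x - T x = y) := by
  refine ⟨fun x hx => h.1 x hx.1, fun y hy => ?_⟩
  obtain ⟨x, hx, hxy⟩ := h.2 y hy.1
  refine ⟨x, ⟨hx, ?_⟩, hxy⟩
  obtain ⟨m, hm, n, hn, rfl⟩ := Submodule.mem_sup.1 (hc.sup_eq_top ▸ Submodule.mem_top : x ∈ M₂ ⊔ N₂)
  have h1 : l • m = y - (l • n - T n) := by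
    rw [← hxy, map_add, hTM m hm, smul_add]; abel
  have h2 : l • m ∈ N₂ := by
    rw [h1]; exact N₂.sub_mem hy.2 (N₂.sub_mem (N₂.smul_mem l hn) (hTN n hn))
  have h3 : l • m = 0 := Submodule.disjoint_def.1 hc.disjoint _ (M₂.smul_mem l hm) h2
  have h4 : m = 0 := (smul_eq_zero.1 h3).resolve_left hl
  simpa [h4] using hn

/-- Basic facts on a reducing pair of `T` with `T` bijective on `M`, and `R` with `TR = RT = 0`. -/
lemma aux_facts (T R : X →L[ℂ] X) (hTR : ∀ x, T (R x) = 0) (hRT : ∀ x, R (T x) = 0)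
    (M N : Submodule ℂ X) (hM : ∀ x ∈ M, T x ∈ M) (hN : ∀ x ∈ N, T x ∈ N) (hc : IsCompl M N)
    (h : (∀ x ∈ M, T x = 0 → x = 0) ∧ (∀ y ∈ M, ∃ x ∈ M, T x = y)) :
    (∀ x ∈ M, R x = 0) ∧ (∀ x, T x = 0 → x ∈ N) ∧ (∀ x ∈ N, R x ∈ N) := by
  have hk : ∀ x, T x = 0 → x ∈ N := by
    intro x hx
    obtain ⟨m, hm, n, hn, rfl⟩ := Submodule.mem_sup.1 (hc.sup_eq_top ▸ Submodule.mem_top : x ∈ M ⊔ N)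
    have h1 : T m = - T n := by rw [map_add] at hx; exact eq_neg_of_add_eq_zero_left hx
    have h3 : T m = 0 := Submodule.disjoint_def.1 hc.disjoint _ (hM m hm)
      (h1 ▸ N.neg_mem (hN n hn))
    simpa [h.1 m hm h3] using hn
  refine ⟨fun x hx => ?_, hk, fun x _ => hk _ (hTR x)⟩
  obtain ⟨z, _, rfl⟩ := h.2 x hx
  exact hRT z

/-- If `T` and `R` are almost invertible and `TR = RT = 0`, then `T + R` is almost
invertible. -/
theorem almostInv_add (T R : X →L[ℂ] X) (hTR : T * R = 0) (hRT : R * T = 0)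
    (hT : AlmostInv T) (hR : AlmostInv R) : AlmostInv (T + R) := by
  have hTR' : ∀ x, T (R x) = 0 := fun x => DFunLike.congr_fun hTR x
  have hRT' : ∀ x, R (T x) = 0 := fun x => DFunLike.congr_fun hRT x
  obtain ⟨M₁, N₁, hM₁, hN₁, cM₁, cN₁, hc₁, u₁, s₁⟩ := hT
  obtain ⟨M₂, N₂, hM₂, hN₂, cM₂, cN₂, hc₂, u₂, s₂⟩ := hR
  rw [restr_isUnit_iff _ _ _ cM₁] at u₁
  rw [restr_isUnit_iff _ _ _ cM₂] at u₂
  obtain ⟨a₁, k₁, i₁⟩ := aux_facts T R hTR' hRT' M₁ N₁ hM₁ hN₁ hc₁ u₁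
  obtain ⟨a₂, k₂, i₂⟩ := aux_facts R T hRT' hTR' M₂ N₂ hM₂ hN₂ hc₂ u₂
  have hMN₁ : M₁ ≤ N₂ := fun x hx => k₂ x (a₁ x hx)
  have hMN₂ : M₂ ≤ N₁ := fun x hx => k₁ x (a₂ x hx)
  have hM : ∀ x ∈ M₁ ⊔ M₂, (T + R) x ∈ M₁ ⊔ M₂ := by
    intro x hx
    obtain ⟨m, hm, n, hn, rfl⟩ := Submodule.mem_sup.1 hx
    have : (T + R) (m + n) = T m + R n := by simp [a₁ m hm, a₂ n hn]
    rw [this]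
    exact Submodule.add_mem_sup (hM₁ m hm) (hM₂ n hn)
  have hN : ∀ x ∈ N₁ ⊓ N₂, (T + R) x ∈ N₁ ⊓ N₂ := fun x hx =>
    ⟨N₁.add_mem (hN₁ x hx.1) (i₁ x hx.1), N₂.add_mem (i₂ x hx.2) (hN₂ x hx.2)⟩
  have cM : IsClosed ((M₁ ⊔ M₂ : Submodule ℂ X) : Set X) := by
    have htop : Submodule.IsTopCompl M₁ N₁ :=
      Submodule.isTopCompl_iff_isCompl_isClosed.2 ⟨hc₁, cM₁, cN₁⟩
    obtain ⟨P, hP₁, hP₂⟩ : ∃ P : X →L[ℂ] M₁, (∀ x ∈ M₁, (P x : X) = x) ∧ ∀ x ∈ N₁, P x = 0 :=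
      ⟨M₁.projectionOntoL N₁ htop,
        fun x hx => congrArg Subtype.val (Submodule.projectionOntoL_apply_left htop ⟨x, hx⟩),
        fun x hx => Submodule.projectionOntoL_apply_right htop ⟨x, hx⟩⟩
    have : ((M₁ ⊔ M₂ : Submodule ℂ X) : Set X) = (fun x => x - (P x : X)) ⁻¹' (M₂ : Set X) := by
      ext x
      constructor
      · intro hx
        obtain ⟨m, hm, n, hn, rfl⟩ := Submodule.mem_sup.1 hx
        simpa [hP₁ m hm, hP₂ n (hMN₂ hn)] using hn
      · intro hx
        have := Submodule.add_mem_sup (P x).2 hx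
        simpa using this
    rw [this]
    exact cM₂.preimage (by fun_prop)
  have cN : IsClosed ((N₁ ⊓ N₂ : Submodule ℂ X) : Set X) := cN₁.inter cN₂
  refine ⟨M₁ ⊔ M₂, N₁ ⊓ N₂, hM, hN, cM, cN, ⟨?_, ?_⟩, ?_, ?_⟩
  · rw [Submodule.disjoint_def]
    intro x hx hx'
    obtain ⟨m, hm, n, hn, rfl⟩ := Submodule.mem_sup.1 hx
    have h1 : m = 0 := Submodule.disjoint_def.1 hc₁.disjoint m hm
      (by simpa using N₁.sub_mem hx'.1 (hMN₂ hn))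
    have h2 : n = 0 := Submodule.disjoint_def.1 hc₂.disjoint n hn
      (by simpa using N₂.sub_mem hx'.2 (hMN₁ hm))
    simp [h1, h2]
  · rw [codisjoint_iff, eq_top_iff]
    rintro x -
    obtain ⟨m, hm, n, hn, rfl⟩ := Submodule.mem_sup.1
      (hc₁.sup_eq_top ▸ Submodule.mem_top : x ∈ M₁ ⊔ N₁)
    obtain ⟨p, hp, q, hq, rfl⟩ := Submodule.mem_sup.1
      (hc₂.sup_eq_top ▸ Submodule.mem_top : n ∈ M₂ ⊔ N₂)
    rw [← add_assoc]
    exact Submodule.add_mem_sup (Submodule.add_mem_sup hm hp)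
      ⟨by simpa using N₁.sub_mem hn (hMN₂ hp), hq⟩
  · rw [restr_isUnit_iff _ _ _ cM]
    constructor
    · intro x hx h
      obtain ⟨m, hm, n, hn, rfl⟩ := Submodule.mem_sup.1 hx
      have h0 : T m + R n = 0 := by simpa [a₁ m hm, a₂ n hn] using h
      have h1 : T m = - R n := eq_neg_of_add_eq_zero_left h0
      have h2 : T m = 0 := Submodule.disjoint_def.1 hc₁.disjoint _ (hM₁ m hm)
        (h1 ▸ N₁.neg_mem (hMN₂ (hM₂ n hn)))
      have h3 : R n = 0 := by simpa [h2] using h0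
      simp [u₁.1 m hm h2, u₂.1 n hn h3]
    · intro y hy
      obtain ⟨m, hm, n, hn, rfl⟩ := Submodule.mem_sup.1 hy
      obtain ⟨p, hp, rfl⟩ := u₁.2 m hm
      obtain ⟨q, hq, rfl⟩ := u₂.2 n hn
      exact ⟨p + q, Submodule.add_mem_sup hp hq, by simp [a₁ p hp, a₂ q hq]⟩
  · refine (((countable_singleton (0 : ℂ)).union s₁).union s₂).mono fun l hl => ?_
    by_contra hcon
    simp only [mem_union, mem_singleton_iff, not_or] at hcon
    obtain ⟨⟨l0, l1⟩, l2⟩ := hcon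
    rw [restr_notMem_spectrum_iff _ _ _ cN₁] at l1
    rw [restr_notMem_spectrum_iff _ _ _ cN₂] at l2
    have b₁ := aux_inter T R M₂ N₁ N₂ hc₂ a₂ i₂ l l0 l1
    have b₂ := aux_inter R T M₁ N₂ N₁ hc₁ a₁ i₁ l l0 l2
    rw [inf_comm] at b₂
    refine (restr_notMem_spectrum_iff _ _ _ cN l).2 ⟨?_, ?_⟩ hl
    all_goals
      have key : ∀ x, l • (l • x - R x) - T (l • x - R x) = l • (l • x - (T + R) x) := by
        intro x
        simp only [map_sub, map_smul, hTR', ContinuousLinearMap.add_apply, smul_sub, smul_add]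
        abel
    · intro x hx h
      refine b₂.1 x hx (b₁.1 _ ?_ ?_)
      · exact ⟨N₁.sub_mem (N₁.smul_mem l hx.1) (i₁ x hx.1),
          N₂.sub_mem (N₂.smul_mem l hx.2) (hN₂ x hx.2)⟩
      · rw [key, h, smul_zero]
    · intro y hy
      obtain ⟨u, hu, hu'⟩ := b₁.2 (l • y) (Submodule.smul_mem _ l hy)
      obtain ⟨x, hx, rfl⟩ := b₂.2 u hu
      rw [key] at hu'
      exact ⟨x, hx, smul_right_injective X l0 hu'⟩
end

section
/- Let X be a complex Banach space and let T, S be bounded linear operators on X with TS = ST. If σ(T) and σ(S) are at most countable, then σ(T + S) and σ(TS) are at most countable. -/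
open Ordinal Set

variable {X : Type*} [NormedAddCommGroup X] [NormedSpace ℂ X] [CompleteSpace X]

section Aux

variable {A : Type*} [NormedRing A] [NormedAlgebra ℂ A] [CompleteSpace A]

/-- The spectrum of a bicommutant element, computed in the bicommutant, is contained in its
spectrum in the whole algebra. -/
theorem aux_spectrum_subset (s : Set A)
    (c : Subalgebra.centralizer ℂ s) :
    spectrum ℂ c ⊆ spectrum ℂ (c : A) := by
  intro z hz
  rw [spectrum.mem_iff] at hz ⊢
  intro hu
  apply hz
  obtain ⟨u, hu⟩ := hu
  have hmem : (u : A) ∈ Subalgebra.centralizer ℂ s := by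
    rw [hu]
    exact sub_mem (Subalgebra.algebraMap_mem _ z) c.2
  have hinv : ((u⁻¹ : Aˣ) : A) ∈ Subalgebra.centralizer ℂ s := by
    rw [Subalgebra.mem_centralizer_iff] at hmem ⊢
    intro g hg
    have h1 : Commute g (u : A) := hmem g hg
    exact h1.units_inv_right
  have h1 : (algebraMap ℂ (Subalgebra.centralizer ℂ s) z - c) = ⟨(u : A), hmem⟩ :=
    Subtype.ext hu.symm
  rw [h1]
  exact ⟨⟨⟨u, hmem⟩, ⟨_, hinv⟩, Subtype.ext u.mul_inv, Subtype.ext u.inv_mul⟩, rfl⟩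

theorem aux_characters (a b : A) (hc : a * b = b * a) :
    ∀ z, (z ∈ spectrum ℂ (a + b) →
        ∃ x ∈ spectrum ℂ a, ∃ y ∈ spectrum ℂ b, x + y = z) ∧
      (z ∈ spectrum ℂ (a * b) →
        ∃ x ∈ spectrum ℂ a, ∃ y ∈ spectrum ℂ b, x * y = z) := by
  let s : Set A := Set.centralizer {a, b}
  let C := Subalgebra.centralizer ℂ s
  have hsub : ({a, b} : Set A) ⊆ s := by
    intro x hx y hy
    rcases hx with rfl | rfl <;> rcases hy with rfl | rfl <;> first | rfl | exact hc | exact hc.symm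
  have hcomm : ∀ x y : C, x * y = y * x := by
    intro x y
    apply Subtype.ext
    have hx : (x : A) ∈ s := fun g hg => x.2 g (hsub hg)
    exact y.2 _ hx
  letI : NormedCommRing C := { (inferInstance : NormedRing C) with mul_comm := hcomm }
  have hcl : IsClosed (C : Set A) := Set.isClosed_centralizer s
  haveI : CompleteSpace C := hcl.completeSpace_coe
  have ha : a ∈ C := fun g hg => (hg a (by simp)).symm
  have hb : b ∈ C := fun g hg => (hg b (by simp)).symm
  let a' : C := ⟨a, ha⟩
  let b' : C := ⟨b, hb⟩
  have key : ∀ f : WeakDual.characterSpace ℂ C, f a' ∈ spectrum ℂ a ∧ f b' ∈ spectrum ℂ b := by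
    intro f
    exact ⟨aux_spectrum_subset s a' (WeakDual.CharacterSpace.mem_spectrum_iff_exists.2 ⟨f, rfl⟩),
      aux_spectrum_subset s b' (WeakDual.CharacterSpace.mem_spectrum_iff_exists.2 ⟨f, rfl⟩)⟩
  intro z
  constructor
  · intro hz
    have hz' : z ∈ spectrum ℂ (a' + b') := spectrum.subset_subalgebra (a' + b') hz
    obtain ⟨f, hf⟩ := WeakDual.CharacterSpace.mem_spectrum_iff_exists.1 hz'
    exact ⟨f a', (key f).1, f b', (key f).2, by rw [← hf, map_add]⟩
  · intro hz
    have hz' : z ∈ spectrum ℂ (a' * b') := spectrum.subset_subalgebra (a' * b') hz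
    obtain ⟨f, hf⟩ := WeakDual.CharacterSpace.mem_spectrum_iff_exists.1 hz'
    exact ⟨f a', (key f).1, f b', (key f).2, by rw [← hf, map_mul]⟩

end Aux

/-- If `T` and `S` commute and both have at most countable spectrum, then `T + S` and
`TS` have at most countable spectrum. -/
theorem countable_spectrum_add_and_mul (T S : X →L[ℂ] X) (hc : T * S = S * T)
    (hT : (spectrum ℂ T).Countable) (hS : (spectrum ℂ S).Countable) :
    (spectrum ℂ (T + S)).Countable ∧ (spectrum ℂ (T * S)).Countable := by
  have h := aux_characters T S hc
  constructor
  · refine (hT.image2 hS (fun x y => x + y)).mono ?_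
    intro z hz
    exact (h z).1 hz
  · refine (hT.image2 hS (fun x y => x * y)).mono ?_
    intro z hz
    exact (h z).2 hz
end
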